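/- Let n ≥ 1 and let γ > 0. Then there exists a constant C = C(γ,n) > 0 such that for every Schwartz function u on ℝ^{n+1}, ‖u‖_{F̃⁰_{∞,1}} ≤ C (1 + ‖u‖_{F̃⁰_{∞,2}} (1 + (log⁺ ‖u‖_{F^γ_{∞,2}})^{1/2})). -/

import Mathlib

open MeasureTheory Real
open scoped FourierTransform ENNReal

noncomputable section

/-- The model space for `ℝ^{n+1}`: generic point `z = (x, t)` where the spatial
coordinates are `x i = z i.castSucc` (`i : Fin n`) and the time coordinate is
`t = z (Fin.last n)`. -/
abbrev PSpace (n : ℕ) := EuclideanSpace ℝ (Fin (n + 1))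

/-- The parabolic distance `‖z‖ₚ = max (maxᵢ |xᵢ|) √|t|` from `z` to the origin. -/
def pnorm {n : ℕ} (z : PSpace n) : ℝ :=
  max (⨆ i : Fin n, |z i.castSucc|) (Real.sqrt |z (Fin.last n)|)

/-- The parabolic cube of radius `r` centered at `z₀`. -/
def pCube {n : ℕ} (z₀ : PSpace n) (r : ℝ) : Set (PSpace n) :=
  {z | pnorm (z - z₀) < r}

/-- The set of mean oscillations `⨍_Q |u - u_Q|` of `u` over parabolic cubes `Q ⊆ O`. -/
def oscSet {n : ℕ} (O : Set (PSpace n)) (u : PSpace n → ℝ) : Set ℝ :=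
  {v | ∃ z₀ r, 0 < r ∧ pCube z₀ r ⊆ O ∧
    v = ⨍ z in pCube z₀ r, |u z - ⨍ w in pCube z₀ r, u w|}

/-- The parabolic BMO norm of `u` over `O`. -/
def pBMO {n : ℕ} (O : Set (PSpace n)) (u : PSpace n → ℝ) : ℝ := sSup (oscSet O u)

/-- The set of quantities `inf_c ⨍_Q |u - c|` over parabolic cubes `Q ⊆ O`. -/
def infOscSet {n : ℕ} (O : Set (PSpace n)) (u : PSpace n → ℝ) : Set ℝ :=
  {v | ∃ z₀ r, 0 < r ∧ pCube z₀ r ⊆ O ∧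
    v = ⨅ c : ℝ, ⨍ z in pCube z₀ r, |u z - c|}

/-- Time derivative `D_t u`. -/
def Dt {n : ℕ} (u : PSpace n → ℝ) : PSpace n → ℝ :=
  fun z => fderiv ℝ u z (EuclideanSpace.single (Fin.last n) 1)

/-- Spatial derivative in direction `i`. -/
def Dx {n : ℕ} (i : Fin n) (u : PSpace n → ℝ) : PSpace n → ℝ :=
  fun z => fderiv ℝ u z (EuclideanSpace.single i.castSucc 1)

/-- Spatial derivative `D_x^α` for a multi-index `α`. -/
def DxPow {n : ℕ} (α : Fin n → ℕ) (u : PSpace n → ℝ) : PSpace n → ℝ :=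
  (List.finRange n).foldr (fun i v => (Dx i)^[α i] v) u

/-- The mixed derivative `D_t^r D_x^α u`. -/
def mixDeriv {n : ℕ} (r : ℕ) (α : Fin n → ℕ) (u : PSpace n → ℝ) : PSpace n → ℝ :=
  Dt^[r] (DxPow α u)

/-- The `L²(O)` norm. -/
def L2norm {n : ℕ} (O : Set (PSpace n)) (v : PSpace n → ℝ) : ℝ :=
  (eLpNorm v 2 (volume.restrict O)).toReal

/-- The parabolic Sobolev norm `‖u‖_{W₂^{2m,m}(O)} = Σ_{2r+s ≤ 2m} Σ_{|α| = s}
‖D_t^r D_x^α u‖_{L²(O)}`. -/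
def sobNorm {n : ℕ} (m : ℕ) (O : Set (PSpace n)) (u : PSpace n → ℝ) : ℝ :=
  ∑ p ∈ (Finset.range (2 * m + 1) ×ˢ Finset.range (2 * m + 1)).filter
      (fun p => 2 * p.1 + p.2 ≤ 2 * m),
    ∑ α ∈ Finset.Nat.antidiagonalTuple n p.2, L2norm O (mixDeriv p.1 α u)

/-- `log⁺ x = max (log x) 0`. -/
def logPlus (x : ℝ) : ℝ := max (Real.log x) 0

/-- The domain `Ω_T = (0,1)ⁿ × (0,T)`. -/
def OmegaT (n : ℕ) (T : ℝ) : Set (PSpace n) :=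
  {z | (∀ i : Fin n, z i.castSucc ∈ Set.Ioo (0 : ℝ) 1) ∧ z (Fin.last n) ∈ Set.Ioo 0 T}

/-- The anisotropic dilation `η^a z = (η x, η² t)` with `a = (1,…,1,2)`. -/
def pdil {n : ℕ} (η : ℝ) (z : PSpace n) : PSpace n :=
  (EuclideanSpace.equiv (Fin (n + 1)) ℝ).symm
    (fun i => if i = Fin.last n then η ^ 2 * z i else η * z i)

/-- The anisotropic dyadic partition of unity `ψ_j` built from `ψ₀`:
`ψ_j z = ψ₀ (2^{-ja} z) - ψ₀ (2^{-(j-1)a} z)` for `j ≥ 1`. -/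
def psiJ {n : ℕ} (ψ₀ : PSpace n → ℝ) : ℕ → PSpace n → ℝ
  | 0 => ψ₀
  | (j + 1) => fun z =>
      ψ₀ (pdil ((2 : ℝ) ^ (-((j : ℝ) + 1))) z) - ψ₀ (pdil ((2 : ℝ) ^ (-(j : ℝ))) z)

/-- `φ_j = 𝓕⁻¹ ψ_j`, the inverse Fourier transform of `ψ_j`. -/
def phiJ {n : ℕ} (ψ₀ : PSpace n → ℝ) (j : ℕ) : PSpace n → ℂ :=
  𝓕⁻ (fun z => ((psiJ ψ₀ j z : ℝ) : ℂ))

/-- The convolution `(φ * u) z = ∫ φ (z - w) u w dw`. -/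
def pconv {n : ℕ} (φ : PSpace n → ℂ) (u : PSpace n → ℝ) (z : PSpace n) : ℂ :=
  ∫ w, φ (z - w) * (u w : ℂ)

/-- The truncated Lizorkin–Triebel norm `‖u‖_{F̃⁰_{∞,1}} = ‖Σ_{j≥1} |φ_j * u|‖_∞`. -/
def F01norm {n : ℕ} (ψ₀ : PSpace n → ℝ) (u : PSpace n → ℝ) : ℝ :=
  ⨆ z, ∑' j : ℕ, ‖pconv (phiJ ψ₀ (j + 1)) u z‖

/-- The truncated Lizorkin–Triebel norm `‖u‖_{F̃⁰_{∞,2}} = ‖(Σ_{j≥1} |φ_j * u|²)^{1/2}‖_∞`. -/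
def F02norm {n : ℕ} (ψ₀ : PSpace n → ℝ) (u : PSpace n → ℝ) : ℝ :=
  ⨆ z, Real.sqrt (∑' j : ℕ, ‖pconv (phiJ ψ₀ (j + 1)) u z‖ ^ 2)

/-- The Lizorkin–Triebel norm `‖u‖_{F^γ_{∞,2}} = ‖(Σ_{j≥0} 2^{2γj} |φ_j * u|²)^{1/2}‖_∞`. -/
def Fg2norm {n : ℕ} (ψ₀ : PSpace n → ℝ) (γ : ℝ) (u : PSpace n → ℝ) : ℝ :=
  ⨆ z, Real.sqrt (∑' j : ℕ, (2 : ℝ) ^ (2 * γ * j) * ‖pconv (phiJ ψ₀ j) u z‖ ^ 2)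

/-- The anisotropic Besov quasi-norm `‖u‖_{B^s_{p,q}}`. -/
def besovNorm {n : ℕ} (ψ₀ : PSpace n → ℝ) (s : ℝ) (p q : ℝ≥0∞) (u : PSpace n → ℝ) : ℝ :=
  if q = ∞ then ⨆ j : ℕ, (2 : ℝ) ^ (s * j) * (eLpNorm (pconv (phiJ ψ₀ j) u) p volume).toReal
  else (∑' j : ℕ, ((2 : ℝ) ^ (s * j) *
    (eLpNorm (pconv (phiJ ψ₀ j) u) p volume).toReal) ^ q.toReal) ^ (1 / q.toReal)

/-- The standing hypotheses on the cut-off function `ψ₀`: smooth, compactly supported,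
equal to `1` on `{‖z‖ₚ ≤ 1}` and to `0` on `{‖z‖ₚ ≥ 2}`. -/
structure IsCutoff {n : ℕ} (ψ₀ : PSpace n → ℝ) : Prop where
  smooth : ContDiff ℝ (⊤ : ℕ∞) ψ₀
  compact_support : HasCompactSupport ψ₀
  eq_one : ∀ z, pnorm z ≤ 1 → ψ₀ z = 1
  eq_zero : ∀ z, 2 ≤ pnorm z → ψ₀ z = 0

/-! The pieces satisfy `|φ_j * u| ≤ B 2^{-γ j}` with `B = ‖u‖_{F^γ_{∞,2}}`. Split the sum over
`j ≥ 1` at a frequency `N ≈ log⁺ B / (γ log 2)`: the first `N` terms are controlled by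
Cauchy–Schwarz, which costs `√N`, and the remaining terms form a geometric series of size `O(1)`.

A Schwartz function lies in every `F^γ_{∞,2}`: `φ_j * u` is the inverse Fourier transform of
`ψ_j û`, the multiplier `ψ_j` is bounded and (for `j ≥ 1`) vanishes on `‖ξ‖ₚ ≤ 2^{j-1}`, and `û` has
finite moments of every order. -/

section GeometricDecay

lemma sum_range_le_sqrt_mul_sqrt_tsum_sq {a : ℕ → ℝ} (ha : Summable fun j => a j ^ 2) (N : ℕ) :
    ∑ j ∈ Finset.range N, a j ≤ √N * √(∑' j, a j ^ 2) := by
  have cauchy_schwarz : (∑ j ∈ Finset.range N, a j) ^ 2 ≤ N * ∑ j ∈ Finset.range N, a j ^ 2 := by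
    simpa only [Finset.card_range] using
      sq_sum_le_card_mul_sum_sq (s := Finset.range N) (f := a)
  have partial_le : ∑ j ∈ Finset.range N, a j ^ 2 ≤ ∑' j, a j ^ 2 :=
    ha.sum_le_tsum _ fun j _ => sq_nonneg (a j)
  rw [← Real.sqrt_mul N.cast_nonneg]
  exact Real.le_sqrt_of_sq_le (cauchy_schwarz.trans (by gcongr))

lemma le_exp_logPlus (B : ℝ) : B ≤ Real.exp (logPlus B) :=
  (Real.le_exp_log B).trans (Real.exp_le_exp.2 (le_max_left _ _))

lemma sqrt_add_le_add_sqrt {x y : ℝ} (hx : 0 ≤ x) (hy : 0 ≤ y) : √(x + y) ≤ √x + √y := by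
  simp only [Real.sqrt_eq_rpow]
  exact Real.rpow_add_le_add_rpow hx hy (by norm_num) (by norm_num)

lemma exists_nat_mul_pow_le_one {q : ℝ} (hq0 : 0 < q) (hq1 : q < 1) (B : ℝ) :
    ∃ N : ℕ, B * q ^ N ≤ 1 ∧ √N ≤ 1 + (√(-Real.log q))⁻¹ * √(logPlus B) := by
  have hlog : 0 < -Real.log q := neg_pos.2 (Real.log_neg hq0 hq1)
  have hL : 0 ≤ logPlus B := le_max_right _ _
  have hratio : 0 ≤ logPlus B / -Real.log q := by positivity
  refine ⟨⌈logPlus B / -Real.log q⌉₊, ?_, ?_⟩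
  · set N := ⌈logPlus B / -Real.log q⌉₊
    have hN : logPlus B ≤ N * -Real.log q := (div_le_iff₀ hlog).1 (Nat.le_ceil _)
    calc B * q ^ N ≤ Real.exp (logPlus B) * q ^ N := by gcongr; exact le_exp_logPlus B
      _ = Real.exp (logPlus B + N * Real.log q) := by
          rw [Real.exp_add, Real.exp_nat_mul, Real.exp_log hq0]
      _ ≤ 1 := Real.exp_le_one_iff.2 (by linarith)
  · calc √(⌈logPlus B / -Real.log q⌉₊ : ℝ) ≤ √(logPlus B / -Real.log q + 1) :=
          Real.sqrt_le_sqrt (Nat.ceil_lt_add_one hratio).le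
      _ ≤ √(logPlus B / -Real.log q) + √1 := sqrt_add_le_add_sqrt hratio zero_le_one
      _ = 1 + (√(-Real.log q))⁻¹ * √(logPlus B) := by
          rw [Real.sqrt_div hL, Real.sqrt_one, div_eq_inv_mul, add_comm]

variable {a : ℕ → ℝ} {q B : ℝ}

lemma summable_of_le_geometric (ha : ∀ j, 0 ≤ a j) (hq0 : 0 ≤ q) (hq1 : q < 1)
    (h : ∀ j, a j ≤ B * q ^ j) : Summable a :=
  ((summable_geometric_of_lt_one hq0 hq1).mul_left B).of_nonneg_of_le ha h

lemma sq_le_geometric (ha : ∀ j, 0 ≤ a j) (h : ∀ j, a j ≤ B * q ^ j) (j : ℕ) :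
    a j ^ 2 ≤ B ^ 2 * (q ^ 2) ^ j := by
  calc a j ^ 2 ≤ (B * q ^ j) ^ 2 := pow_le_pow_left₀ (ha j) (h j) 2
    _ = B ^ 2 * (q ^ 2) ^ j := by ring

lemma summable_sq_of_le_geometric (ha : ∀ j, 0 ≤ a j) (hq0 : 0 ≤ q) (hq1 : q < 1)
    (h : ∀ j, a j ≤ B * q ^ j) : Summable fun j => a j ^ 2 :=
  summable_of_le_geometric (fun j => sq_nonneg (a j)) (sq_nonneg q)
    (pow_lt_one₀ hq0 hq1 two_ne_zero) (sq_le_geometric ha h)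

lemma sqrt_tsum_sq_le_of_le_geometric (ha : ∀ j, 0 ≤ a j) (hq0 : 0 ≤ q) (hq1 : q < 1)
    (h : ∀ j, a j ≤ B * q ^ j) : √(∑' j, a j ^ 2) ≤ √(B ^ 2 * (1 - q ^ 2)⁻¹) := by
  have hq2 : q ^ 2 < 1 := pow_lt_one₀ hq0 hq1 two_ne_zero
  rw [← tsum_geometric_of_lt_one (sq_nonneg q) hq2, ← tsum_mul_left]
  exact Real.sqrt_le_sqrt <| (summable_sq_of_le_geometric ha hq0 hq1 h).tsum_le_tsum
    (sq_le_geometric ha h) ((summable_geometric_of_lt_one (sq_nonneg q) hq2).mul_left _)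

lemma tsum_nat_add_le_of_le_geometric (ha : ∀ j, 0 ≤ a j) (hq0 : 0 ≤ q) (hq1 : q < 1)
    (h : ∀ j, a j ≤ B * q ^ j) {N : ℕ} (hN : B * q ^ N ≤ 1) :
    ∑' j, a (j + N) ≤ (1 - q)⁻¹ := by
  have tail_le : ∀ j, a (j + N) ≤ q ^ j := fun j =>
    calc a (j + N) ≤ B * q ^ (j + N) := h _
      _ = (B * q ^ N) * q ^ j := by ring
      _ ≤ q ^ j := mul_le_of_le_one_left (by positivity) hN
  rw [← tsum_geometric_of_lt_one hq0 hq1]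
  exact ((summable_nat_add_iff N).2 (summable_of_le_geometric ha hq0 hq1 h)).tsum_le_tsum tail_le
    (summable_geometric_of_lt_one hq0 hq1)

theorem tsum_le_sqrt_tsum_sq_mul_sqrt_logPlus (ha : ∀ j, 0 ≤ a j) (hq0 : 0 < q) (hq1 : q < 1)
    (h : ∀ j, a j ≤ B * q ^ j) :
    ∑' j, a j ≤
      (1 - q)⁻¹ + √(∑' j, a j ^ 2) * (1 + (√(-Real.log q))⁻¹ * √(logPlus B)) := by
  obtain ⟨N, hBN, sqrt_N_le⟩ := exists_nat_mul_pow_le_one hq0 hq1 B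
  have head_le := sum_range_le_sqrt_mul_sqrt_tsum_sq
    (summable_sq_of_le_geometric ha hq0.le hq1 h) N
  have tail_le := tsum_nat_add_le_of_le_geometric ha hq0.le hq1 h hBN
  calc ∑' j, a j = ∑ j ∈ Finset.range N, a j + ∑' j, a (j + N) :=
        ((summable_of_le_geometric ha hq0.le hq1 h).sum_add_tsum_nat_add N).symm
    _ ≤ √N * √(∑' j, a j ^ 2) + (1 - q)⁻¹ := add_le_add head_le tail_le
    _ ≤ (1 + (√(-Real.log q))⁻¹ * √(logPlus B)) * √(∑' j, a j ^ 2) + (1 - q)⁻¹ := by gcongr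
    _ = _ := by ring

end GeometricDecay

section TriebelSpace

variable {n : ℕ} {ψ₀ u : PSpace n → ℝ} {γ : ℝ}

/-- Membership in the anisotropic Lizorkin–Triebel space `F^γ_{∞,2}`, that is, finiteness of
`Fg2norm ψ₀ γ u`. It is stated separately because `Fg2norm` is real-valued, so that a divergent
series or an unbounded supremum contributes the value `0` instead of `∞`. -/
structure MemFg2 (ψ₀ : PSpace n → ℝ) (γ : ℝ) (u : PSpace n → ℝ) : Prop where
  summable : ∀ z, Summable fun j : ℕ => (2 : ℝ) ^ (2 * γ * j) * ‖pconv (phiJ ψ₀ j) u z‖ ^ 2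
  bddAbove : BddAbove (Set.range fun z =>
    √(∑' j : ℕ, (2 : ℝ) ^ (2 * γ * j) * ‖pconv (phiJ ψ₀ j) u z‖ ^ 2))

lemma two_rpow_mul_sq (γ x : ℝ) (j : ℕ) :
    (2 : ℝ) ^ (2 * γ * j) * x ^ 2 = (((2 : ℝ) ^ γ) ^ j * x) ^ 2 := by
  have weight_eq : (2 : ℝ) ^ (2 * γ * j) = (((2 : ℝ) ^ γ) ^ j) ^ 2 := by
    simp only [← Real.rpow_mul_natCast zero_le_two]
    congr 1
    push_cast
    ring
  rw [weight_eq, mul_pow]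

lemma MemFg2.norm_pconv_le (h : MemFg2 ψ₀ γ u) (j : ℕ) (z : PSpace n) :
    ‖pconv (phiJ ψ₀ j) u z‖ ≤ Fg2norm ψ₀ γ u * ((2 : ℝ) ^ (-γ)) ^ j := by
  have single_le : (2 : ℝ) ^ (2 * γ * j) * ‖pconv (phiJ ψ₀ j) u z‖ ^ 2 ≤
      ∑' k : ℕ, (2 : ℝ) ^ (2 * γ * k) * ‖pconv (phiJ ψ₀ k) u z‖ ^ 2 :=
    (h.summable z).le_tsum j fun k _ => by positivity
  rw [two_rpow_mul_sq] at single_le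
  have weighted_le : ((2 : ℝ) ^ γ) ^ j * ‖pconv (phiJ ψ₀ j) u z‖ ≤ Fg2norm ψ₀ γ u :=
    (Real.le_sqrt_of_sq_le single_le).trans (le_ciSup h.bddAbove z)
  rwa [Real.rpow_neg zero_le_two, inv_pow, ← div_eq_mul_inv, le_div_iff₀' (by positivity)]

lemma MemFg2.norm_pconv_succ_le (h : MemFg2 ψ₀ γ u) (hγ : 0 ≤ γ) (j : ℕ) (z : PSpace n) :
    ‖pconv (phiJ ψ₀ (j + 1)) u z‖ ≤ Fg2norm ψ₀ γ u * ((2 : ℝ) ^ (-γ)) ^ j := by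
  have Fg2_nonneg : 0 ≤ Fg2norm ψ₀ γ u := Real.iSup_nonneg fun z => Real.sqrt_nonneg _
  have ratio_le_one : (2 : ℝ) ^ (-γ) ≤ 1 :=
    Real.rpow_le_one_of_one_le_of_nonpos one_le_two (neg_nonpos.2 hγ)
  refine (h.norm_pconv_le (j + 1) z).trans (mul_le_mul_of_nonneg_left ?_ Fg2_nonneg)
  exact pow_le_pow_of_le_one (by positivity) ratio_le_one j.le_succ

lemma memFg2_of_norm_pconv_le {s K : ℝ} (hs : γ < s)
    (h : ∀ j z, ‖pconv (phiJ ψ₀ j) u z‖ ≤ K * ((2 : ℝ) ^ (-s)) ^ j) : MemFg2 ψ₀ γ u := by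
  have hq1 : (2 : ℝ) ^ (γ - s) < 1 :=
    Real.rpow_lt_one_of_one_lt_of_neg one_lt_two (sub_neg.2 hs)
  have weighted_le : ∀ z j,
      ((2 : ℝ) ^ γ) ^ j * ‖pconv (phiJ ψ₀ j) u z‖ ≤ K * ((2 : ℝ) ^ (γ - s)) ^ j := fun z j =>
    calc ((2 : ℝ) ^ γ) ^ j * ‖pconv (phiJ ψ₀ j) u z‖
        ≤ ((2 : ℝ) ^ γ) ^ j * (K * ((2 : ℝ) ^ (-s)) ^ j) := by gcongr; exact h j z
      _ = K * ((2 : ℝ) ^ (γ - s)) ^ j := by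
          rw [sub_eq_add_neg, Real.rpow_add two_pos, mul_pow]; ring
  constructor
  · intro z
    simp only [two_rpow_mul_sq]
    exact summable_sq_of_le_geometric (fun j => by positivity) (by positivity) hq1 (weighted_le z)
  · refine ⟨√(K ^ 2 * (1 - ((2 : ℝ) ^ (γ - s)) ^ 2)⁻¹), ?_⟩
    rintro _ ⟨z, rfl⟩
    simp only [two_rpow_mul_sq]
    exact sqrt_tsum_sq_le_of_le_geometric (fun j => by positivity) (by positivity) hq1
      (weighted_le z)

lemma MemFg2.sqrt_tsum_sq_le_F02norm (h : MemFg2 ψ₀ γ u) (hγ : 0 < γ) (z : PSpace n) :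
    √(∑' j : ℕ, ‖pconv (phiJ ψ₀ (j + 1)) u z‖ ^ 2) ≤ F02norm ψ₀ u := by
  have hq1 : (2 : ℝ) ^ (-γ) < 1 := Real.rpow_lt_one_of_one_lt_of_neg one_lt_two (neg_neg_of_pos hγ)
  refine le_ciSup (f := fun z => √(∑' j : ℕ, ‖pconv (phiJ ψ₀ (j + 1)) u z‖ ^ 2))
    ⟨√(Fg2norm ψ₀ γ u ^ 2 * (1 - ((2 : ℝ) ^ (-γ)) ^ 2)⁻¹), ?_⟩ z
  rintro _ ⟨w, rfl⟩
  exact sqrt_tsum_sq_le_of_le_geometric (fun j => norm_nonneg _) (by positivity) hq1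
    fun j => h.norm_pconv_succ_le hγ.le j w

end TriebelSpace

section FourierSupport

variable {n : ℕ}

lemma pdil_apply (η : ℝ) (z : PSpace n) (i : Fin (n + 1)) :
    pdil η z i = if i = Fin.last n then η ^ 2 * z i else η * z i := rfl

lemma continuous_pdil (η : ℝ) : Continuous (pdil (n := n) η) := by
  refine (EuclideanSpace.equiv (Fin (n + 1)) ℝ).symm.continuous.comp (continuous_pi fun i => ?_)
  split_ifs <;> fun_prop

lemma pdil_inv_pdil {η : ℝ} (hη : η ≠ 0) (z : PSpace n) : pdil η⁻¹ (pdil η z) = z := by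
  ext i
  simp only [pdil_apply]
  split_ifs <;> field_simp

lemma pnorm_pdil {η : ℝ} (hη : 0 ≤ η) (z : PSpace n) : pnorm (pdil η z) = η * pnorm z := by
  simp only [pnorm, pdil_apply, if_neg (Fin.castSucc_ne_last _), if_true, abs_mul,
    abs_of_nonneg hη, abs_of_nonneg (sq_nonneg η), Real.sqrt_mul (sq_nonneg η), Real.sqrt_sq hη,
    mul_max_of_nonneg _ _ hη, Real.mul_iSup_of_nonneg hη]

lemma pnorm_le_sqrt_one_add_norm_sq (z : PSpace n) : pnorm z ≤ √(1 + ‖z‖ ^ 2) := by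
  have coord_le : ∀ i, |z i| ≤ ‖z‖ := fun i => PiLp.norm_apply_le z i
  refine max_le (Real.iSup_le (fun i => ?_) (Real.sqrt_nonneg _)) (Real.sqrt_le_sqrt ?_)
  · exact (coord_le _).trans (Real.le_sqrt_of_sq_le (by linarith))
  · exact (coord_le _).trans (by nlinarith [sq_nonneg (‖z‖ - 1)])

variable {ψ₀ : PSpace n → ℝ}

lemma integrable_comp_pdil (hcont : Continuous ψ₀) (hsupp : HasCompactSupport ψ₀) {η : ℝ}
    (hη : η ≠ 0) : Integrable fun z => ψ₀ (pdil η z) :=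
  have pdil_closed : Topology.IsClosedEmbedding (pdil (n := n) η) :=
    Function.LeftInverse.isClosedEmbedding (pdil_inv_pdil hη) (continuous_pdil η⁻¹)
      (continuous_pdil η)
  (hcont.comp (continuous_pdil η)).integrable_of_hasCompactSupport
    (hsupp.comp_isClosedEmbedding pdil_closed)

lemma integrable_psiJ (hcont : Continuous ψ₀) (hsupp : HasCompactSupport ψ₀) :
    ∀ j, Integrable (psiJ ψ₀ j)
  | 0 => hcont.integrable_of_hasCompactSupport hsupp
  | _ + 1 => (integrable_comp_pdil hcont hsupp (by positivity)).sub
      (integrable_comp_pdil hcont hsupp (by positivity))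

lemma abs_psiJ_le {M : ℝ} (hM : ∀ z, |ψ₀ z| ≤ M) (j : ℕ) (z : PSpace n) :
    |psiJ ψ₀ j z| ≤ 2 * M := by
  cases j with
  | zero => exact (hM z).trans (by linarith [(abs_nonneg _).trans (hM z)])
  | succ j =>
    rw [two_mul]
    exact (abs_sub _ _).trans (add_le_add (hM _) (hM _))

lemma psiJ_succ_eq_zero (hone : ∀ z, pnorm z ≤ 1 → ψ₀ z = 1) {j : ℕ} {z : PSpace n}
    (hz : pnorm z ≤ 2 ^ j) : psiJ ψ₀ (j + 1) z = 0 := by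
  have eq_one : ∀ s : ℝ, j ≤ s → ψ₀ (pdil ((2 : ℝ) ^ (-s)) z) = 1 := fun s hs => by
    refine hone _ ?_
    rw [pnorm_pdil (by positivity), Real.rpow_neg zero_le_two, inv_mul_le_one₀ (by positivity)]
    rw [← Real.rpow_natCast] at hz
    exact hz.trans (Real.rpow_le_rpow_of_exponent_le one_le_two hs)
  simp only [psiJ, eq_one _ le_rfl, eq_one ((j : ℝ) + 1) (by linarith), sub_self]

lemma two_pow_le_of_psiJ_ne_zero (hone : ∀ z, pnorm z ≤ 1 → ψ₀ z = 1) {j : ℕ} {z : PSpace n}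
    (hz : psiJ ψ₀ j z ≠ 0) : (2 : ℝ) ^ j ≤ 2 * √(1 + ‖z‖ ^ 2) := by
  cases j with
  | zero =>
    have : 1 ≤ √(1 + ‖z‖ ^ 2) := Real.one_le_sqrt.2 (by linarith [sq_nonneg ‖z‖])
    linarith
  | succ j =>
    have lt_pnorm : (2 : ℝ) ^ j < pnorm z := not_le.1 fun h => hz (psiJ_succ_eq_zero hone h)
    rw [pow_succ']
    linarith [pnorm_le_sqrt_one_add_norm_sq z]

lemma abs_psiJ_le_rpow (hone : ∀ z, pnorm z ≤ 1 → ψ₀ z = 1) {M : ℝ} (hM : ∀ z, |ψ₀ z| ≤ M)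
    {s : ℝ} (hs : 0 ≤ s) (j : ℕ) (z : PSpace n) :
    |psiJ ψ₀ j z| ≤ 2 * M * 2 ^ s * ((2 : ℝ) ^ (-s)) ^ j * (1 + ‖z‖ ^ 2) ^ (s / 2) := by
  have hM0 : 0 ≤ M := (abs_nonneg _).trans (hM 0)
  rcases eq_or_ne (psiJ ψ₀ j z) 0 with hz | hz
  · rw [hz, abs_zero]; positivity
  have frequency_le : ((2 : ℝ) ^ s) ^ j ≤ 2 ^ s * (1 + ‖z‖ ^ 2) ^ (s / 2) :=
    calc ((2 : ℝ) ^ s) ^ j = ((2 : ℝ) ^ j) ^ s := Real.rpow_pow_comm zero_le_two s j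
      _ ≤ (2 * √(1 + ‖z‖ ^ 2)) ^ s :=
          Real.rpow_le_rpow (by positivity) (two_pow_le_of_psiJ_ne_zero hone hz) hs
      _ = 2 ^ s * (1 + ‖z‖ ^ 2) ^ (s / 2) := by
          rw [Real.mul_rpow zero_le_two (Real.sqrt_nonneg _), Real.sqrt_eq_rpow,
            ← Real.rpow_mul (by positivity), one_div_mul_eq_div]
  calc |psiJ ψ₀ j z| ≤ 2 * M := abs_psiJ_le hM j z
    _ = 2 * M * (((2 : ℝ) ^ s) ^ j * ((2 : ℝ) ^ (-s)) ^ j) := by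
        rw [← mul_pow, ← Real.rpow_add two_pos, add_neg_cancel, Real.rpow_zero, one_pow, mul_one]
    _ ≤ 2 * M * (2 ^ s * (1 + ‖z‖ ^ 2) ^ (s / 2) * ((2 : ℝ) ^ (-s)) ^ j) := by gcongr
    _ = _ := by ring

end FourierSupport

section SchwartzFunctions

variable {n : ℕ} {ψ₀ u : PSpace n → ℝ}

lemma fourierInv_sub_eq_fourier {V E : Type*} [NormedAddCommGroup V] [InnerProductSpace ℝ V]
    [FiniteDimensional ℝ V] [MeasurableSpace V] [BorelSpace V] [NormedAddCommGroup E]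
    [NormedSpace ℂ E] (f : V → E) (z w : V) :
    𝓕⁻ f (z - w) = 𝓕 (fun ξ => 𝐞 (inner ℝ ξ z) • f ξ) w := by
  simp only [Real.fourierInv_eq, Real.fourier_eq, inner_sub_right, smul_smul,
    ← AddChar.map_add_eq_mul, neg_add_eq_sub]

lemma pconv_fourierInv {f : PSpace n → ℂ} (hf : Integrable f) (hu : Integrable u)
    (z : PSpace n) :
    pconv (𝓕⁻ f) u z = 𝓕⁻ (fun ξ => f ξ * 𝓕 (fun w => (u w : ℂ)) ξ) z := by
  have modulated_integrable : Integrable fun ξ => 𝐞 (inner ℝ ξ z) • f ξ := by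
    simpa only [inner_neg_right, neg_neg] using (Real.fourierIntegral_convergent_iff (-z)).2 hf
  have self_adjoint := VectorFourier.integral_fourierIntegral_smul_eq_flip (μ := volume)
    (ν := volume) (L := innerₗ (PSpace n)) (g := fun w => (u w : ℂ)) Real.continuous_fourierChar
    continuous_inner modulated_integrable hu.ofReal
  rw [flip_innerₗ] at self_adjoint
  calc pconv (𝓕⁻ f) u z = ∫ w, 𝓕 (fun ξ => 𝐞 (inner ℝ ξ z) • f ξ) w • (u w : ℂ) := by
        simp only [pconv, fourierInv_sub_eq_fourier, smul_eq_mul]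
    _ = ∫ ξ, (𝐞 (inner ℝ ξ z) • f ξ) • 𝓕 (fun w => (u w : ℂ)) ξ := self_adjoint
    _ = 𝓕⁻ (fun ξ => f ξ * 𝓕 (fun w => (u w : ℂ)) ξ) z := by
        simp only [Real.fourierInv_eq, smul_eq_mul, smul_mul_assoc]

lemma norm_pconv_fourierInv_le {f : PSpace n → ℂ} (hf : Integrable f) (hu : Integrable u)
    (z : PSpace n) :
    ‖pconv (𝓕⁻ f) u z‖ ≤ ∫ ξ, ‖f ξ‖ * ‖𝓕 (fun w => (u w : ℂ)) ξ‖ := by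
  simp only [pconv_fourierInv hf hu, ← norm_mul]
  exact VectorFourier.norm_fourierIntegral_le_integral_norm _ _ _ _ _

theorem memFg2_of_integrable_fourier (hcont : Continuous ψ₀) (hsupp : HasCompactSupport ψ₀)
    (hone : ∀ z, pnorm z ≤ 1 → ψ₀ z = 1) (hu : Integrable u) {γ s : ℝ} (hs : 0 ≤ s)
    (hγs : γ < s)
    (hmoment : Integrable fun ξ => (1 + ‖ξ‖ ^ 2) ^ (s / 2) * ‖𝓕 (fun w => (u w : ℂ)) ξ‖) :
    MemFg2 ψ₀ γ u := by
  obtain ⟨M, hM⟩ := hsupp.exists_bound_of_continuous hcont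
  set I := ∫ ξ, (1 + ‖ξ‖ ^ 2) ^ (s / 2) * ‖𝓕 (fun w => (u w : ℂ)) ξ‖
  refine memFg2_of_norm_pconv_le (K := 2 * M * 2 ^ s * I) hγs fun j z => ?_
  calc ‖pconv (phiJ ψ₀ j) u z‖
      ≤ ∫ ξ, ‖(psiJ ψ₀ j ξ : ℂ)‖ * ‖𝓕 (fun w => (u w : ℂ)) ξ‖ :=
        norm_pconv_fourierInv_le (integrable_psiJ hcont hsupp j).ofReal hu z
    _ ≤ ∫ ξ, 2 * M * 2 ^ s * ((2 : ℝ) ^ (-s)) ^ j *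
          ((1 + ‖ξ‖ ^ 2) ^ (s / 2) * ‖𝓕 (fun w => (u w : ℂ)) ξ‖) := by
        refine integral_mono_of_nonneg (.of_forall fun ξ => by positivity)
          (hmoment.const_mul _) (.of_forall fun ξ => ?_)
        simp only [← mul_assoc, Complex.norm_real, Real.norm_eq_abs]
        gcongr
        exact abs_psiJ_le_rpow hone hM hs j ξ
    _ = 2 * M * 2 ^ s * I * ((2 : ℝ) ^ (-s)) ^ j := by rw [integral_const_mul]; ring

lemma integrable_one_add_norm_sq_rpow_mul_norm {E F : Type*} [NormedAddCommGroup E]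
    [InnerProductSpace ℝ E] [FiniteDimensional ℝ E] [MeasurableSpace E] [BorelSpace E]
    [NormedAddCommGroup F] [NormedSpace ℝ F] (V : SchwartzMap E F) (r : ℝ) :
    Integrable fun ξ => (1 + ‖ξ‖ ^ 2) ^ r * ‖V ξ‖ := by
  have weight_growth := Function.hasTemperateGrowth_one_add_norm_sq_rpow E r
  have weighted_integrable :=
    (SchwartzMap.smulLeftCLM F (fun ξ : E => (1 + ‖ξ‖ ^ 2) ^ r) V).integrable (μ := volume)
  refine weighted_integrable.norm.congr (.of_forall fun ξ => ?_)
  beta_reduce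
  rw [SchwartzMap.smulLeftCLM_apply_apply weight_growth, norm_smul,
    Real.norm_of_nonneg (by positivity)]

theorem memFg2_schwartzMap (hcont : Continuous ψ₀) (hsupp : HasCompactSupport ψ₀)
    (hone : ∀ z, pnorm z ≤ 1 → ψ₀ z = 1) (γ : ℝ) (u : SchwartzMap (PSpace n) ℝ) :
    MemFg2 ψ₀ γ u := by
  have hγ : γ < |γ| + 1 := (le_abs_self γ).trans_lt (lt_add_one _)
  refine memFg2_of_integrable_fourier hcont hsupp hone u.integrable (by positivity) hγ ?_
  exact integrable_one_add_norm_sq_rpow_mul_norm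
    (𝓕 (SchwartzMap.postcompCLM (𝕜 := ℝ) Complex.ofRealCLM u)) _

end SchwartzFunctions

theorem basic_log_inequality_triebel_general {γ : ℝ} (hγ : 0 < γ) :
    ∃ C : ℝ, 0 < C ∧ ∀ {n : ℕ} {ψ₀ u : PSpace n → ℝ}, MemFg2 ψ₀ γ u →
      F01norm ψ₀ u ≤ C * (1 + F02norm ψ₀ u * (1 + √(logPlus (Fg2norm ψ₀ γ u)))) := by
  set q : ℝ := 2 ^ (-γ)
  have hq0 : 0 < q := by positivity
  have hq1 : q < 1 := Real.rpow_lt_one_of_one_lt_of_neg one_lt_two (neg_neg_of_pos hγ)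
  obtain ⟨C, one_le_C, inv_le_C, log_le_C⟩ :
      ∃ C : ℝ, 1 ≤ C ∧ (1 - q)⁻¹ ≤ C ∧ (√(-Real.log q))⁻¹ ≤ C :=
    ⟨max 1 (max (1 - q)⁻¹ (√(-Real.log q))⁻¹), by simp⟩
  refine ⟨C, by linarith, fun {n ψ₀ u} h => ciSup_le fun z => ?_⟩
  have l2_le := h.sqrt_tsum_sq_le_F02norm hγ z
  have F02_nonneg := (Real.sqrt_nonneg _).trans l2_le
  calc ∑' j : ℕ, ‖pconv (phiJ ψ₀ (j + 1)) u z‖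
      ≤ (1 - q)⁻¹ + √(∑' j : ℕ, ‖pconv (phiJ ψ₀ (j + 1)) u z‖ ^ 2) *
          (1 + (√(-Real.log q))⁻¹ * √(logPlus (Fg2norm ψ₀ γ u))) :=
        tsum_le_sqrt_tsum_sq_mul_sqrt_logPlus (fun j => norm_nonneg _) hq0 hq1
          fun j => h.norm_pconv_succ_le hγ.le j z
    _ ≤ C + F02norm ψ₀ u * (C + C * √(logPlus (Fg2norm ψ₀ γ u))) := by gcongr
    _ = C * (1 + F02norm ψ₀ u * (1 + √(logPlus (Fg2norm ψ₀ γ u)))) := by ring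

/-- Step 2 of Lemma 2.9:
`‖u‖_{F̃⁰_{∞,1}} ≤ C (1 + ‖u‖_{F̃⁰_{∞,2}} (1 + (log⁺ ‖u‖_{F^γ_{∞,2}})^{1/2}))`. -/
theorem basic_log_inequality_triebel (n : ℕ) (hn : 1 ≤ n) (γ : ℝ) (hγ : 0 < γ)
    (ψ₀ : PSpace n → ℝ) (hψ : IsCutoff ψ₀) :
    ∃ C : ℝ, 0 < C ∧ ∀ u : SchwartzMap (PSpace n) ℝ,
      F01norm ψ₀ ⇑u ≤ C * (1 + F02norm ψ₀ ⇑u *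
        (1 + Real.sqrt (logPlus (Fg2norm ψ₀ γ ⇑u)))) :=
  let ⟨C, hC, h⟩ := basic_log_inequality_triebel_general hγ
  ⟨C, hC, fun u => h (memFg2_schwartzMap hψ.smooth.continuous hψ.compact_support hψ.eq_one γ u)⟩

end
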